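/- Let n ≥ 1 and let Q ⊆ ℝⁿ be a polytope containing 0 in its interior such that every proper face of Q is a simplex, and such that every extreme point of the dual polytope Q* lies in the lattice ℤⁿ. Then the number of vertices of Q that belong to ℤⁿ is at most 3n. -/

import Mathlib

/-- The dual set `Q* = {v : ⟨v,u⟩ ≥ -1 for all u ∈ Q}` of a subset of `ℝⁿ`. -/
def dualSet (n : ℕ) (Q : Set (Fin n → ℝ)) : Set (Fin n → ℝ) :=
  {v | ∀ u ∈ Q, -1 ≤ ∑ i, v i * u i}

/-- A point of `ℝⁿ` lies in the lattice `ℤⁿ`. -/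
def IsLatticePoint {n : ℕ} (u : Fin n → ℝ) : Prop :=
  ∀ i, ∃ m : ℤ, u i = (m : ℝ)

/-!
Write `V` for the vertex set of `Q` and `P = Q*` for the dual polytope. Simpliciality of `Q` means
that the `n` vertices of `Q` on which a vertex `v` of `P` takes its minimal value `-1` form a basis
of `ℝⁿ`. Moving `v` along a vector of the dual basis reaches an adjacent vertex of `P`, whose facet
exchanges only one vertex of `Q`. If `u` is a vertex of `Q` pairing integrally with the vertices
of `P` and `⟨v, u⟩ = 0`, then some coordinate of `u` in the basis is negative; the adjacent vertex
in that direction is negative on `u`, hence equal to `-1`, so `u` is the exchanged vertex. Thus at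
most `n` such `u` satisfy `⟨v, u⟩ = 0`, just as at most `n` satisfy `⟨v, u⟩ = -1`.

Since `1 - m ≤ 2 [m = -1] + [m = 0]` for integers `m ≥ -1`, the affine function
`v ↦ ∑ u, (1 - ⟨v, u⟩)`, summed over the counted vertices `u`, is at most `3n` at every vertex
of `P`, hence on all of `P`; at `v = 0` it is the number of these vertices.
-/

open Matrix

theorem linearIndependent_of_affineIndependent_of_map_eq {ι k E : Type*} [Field k]
    [AddCommGroup E] [Module k E] {p : ι → E} (hp : AffineIndependent k p) (f : E →ₗ[k] k) {c : k}
    (hc : c ≠ 0) (hf : ∀ i, f (p i) = c) : LinearIndependent k p := by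
  rw [linearIndependent_iff']
  intro s g hg
  refine affineIndependent_iff.1 hp s g ?_ hg
  have hfg : (∑ i ∈ s, g i) * c = 0 := by
    simpa only [map_sum, map_smul, hf, smul_eq_mul, ← Finset.sum_mul, map_zero]
      using congrArg f hg
  exact (mul_eq_zero.1 hfg).resolve_right hc

theorem apply_eq_mul_coord_of_forall_ne {ι k E : Type*} [CommSemiring k] [AddCommMonoid E]
    [Module k E] (b : Module.Basis ι k E) {f : E →ₗ[k] k} {i : ι} (hf : ∀ j ≠ i, f (b j) = 0)
    (x : E) : f x = f (b i) * b.coord i x := by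
  classical
  refine LinearMap.congr_fun (g := f (b i) • b.coord i) (b.ext fun j => ?_) x
  rw [LinearMap.smul_apply, smul_eq_mul, b.coord_apply, b.repr_self_apply]
  split_ifs with h
  · rw [h, mul_one]
  · rw [hf j h, mul_zero]

theorem finite_extremePoints_convexHull {E : Type*} [AddCommGroup E] [Module ℝ E] {s : Set E}
    (hs : s.Finite) : ((convexHull ℝ s).extremePoints ℝ).Finite :=
  hs.subset extremePoints_convexHull_subset

theorem convexHull_extremePoints_convexHull {E : Type*} [AddCommGroup E] [Module ℝ E]
    [TopologicalSpace E] [IsTopologicalAddGroup E] [ContinuousSMul ℝ E] [T2Space E]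
    [LocallyConvexSpace ℝ E] {s : Set E} (hs : s.Finite) :
    convexHull ℝ ((convexHull ℝ s).extremePoints ℝ) = convexHull ℝ s := by
  rw [← ((finite_extremePoints_convexHull hs).isClosed_convexHull ℝ).closure_eq]
  exact closure_convexHull_extremePoints (hs.isCompact_convexHull ℝ) (convex_convexHull ℝ s)

variable {n : ℕ}

theorem exists_forall_dotProduct_eq (f : Module.Dual ℝ (Fin n → ℝ)) :
    ∃ w : Fin n → ℝ, ∀ x, w ⬝ᵥ x = f x :=
  ⟨(dotProductEquiv ℝ (Fin n)).symm f,
    LinearMap.congr_fun ((dotProductEquiv ℝ (Fin n)).apply_symm_apply f)⟩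

theorem exists_basis_coe_of_forall_dotProduct_eq_zero {s : Set (Fin n → ℝ)}
    (hind : LinearIndepOn ℝ id s) (hs : ∀ w : Fin n → ℝ, (∀ u ∈ s, w ⬝ᵥ u = 0) → w = 0) :
    ∃ b : Module.Basis s ℝ (Fin n → ℝ), ∀ e, b e = e := by
  have hspan : ⊤ ≤ Submodule.span ℝ (Set.range fun e : s => (e : Fin n → ℝ)) := by
    rw [Subtype.range_coe, top_le_iff, ← Submodule.dualAnnihilator_eq_bot_iff, eq_bot_iff]
    intro f hf
    obtain ⟨w, hw⟩ := exists_forall_dotProduct_eq f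
    have hw0 : w = 0 := hs w fun u hu =>
      (hw u).trans ((Submodule.mem_dualAnnihilator f).1 hf u (Submodule.subset_span hu))
    exact LinearMap.ext fun x => by rw [← hw x, hw0, zero_dotProduct, LinearMap.zero_apply]
  exact ⟨Module.Basis.mk hind hspan, fun e => Module.Basis.mk_apply hind hspan e⟩

theorem ncard_eq_of_basis {s : Set (Fin n → ℝ)} (b : Module.Basis s ℝ (Fin n → ℝ)) :
    s.ncard = n := by
  rw [← Nat.card_coe_set_eq, ← Module.finrank_eq_nat_card_basis b, Module.finrank_fin_fun]

section DualSet

variable {V : Set (Fin n → ℝ)} {v w : Fin n → ℝ}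

theorem mem_dualSet : v ∈ dualSet n V ↔ ∀ u ∈ V, -1 ≤ v ⬝ᵥ u := Iff.rfl

theorem convex_setOf_le_dotProduct (u : Fin n → ℝ) (c : ℝ) : Convex ℝ {v | c ≤ v ⬝ᵥ u} :=
  convex_halfSpace_ge ⟨fun v w => add_dotProduct v w u, fun r v => smul_dotProduct r v u⟩ c

theorem isClosed_setOf_le_dotProduct (u : Fin n → ℝ) (c : ℝ) : IsClosed {v | c ≤ v ⬝ᵥ u} :=
  isClosed_le continuous_const (continuous_id.dotProduct continuous_const)

theorem dualSet_eq_iInter (V : Set (Fin n → ℝ)) : dualSet n V = ⋂ u ∈ V, {v | -1 ≤ v ⬝ᵥ u} := by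
  ext v
  simp only [mem_dualSet, Set.mem_iInter, Set.mem_ofPred_eq]

theorem convex_dualSet (V : Set (Fin n → ℝ)) : Convex ℝ (dualSet n V) := by
  rw [dualSet_eq_iInter]
  exact convex_iInter₂ fun u _ => convex_setOf_le_dotProduct u _

theorem isClosed_dualSet (V : Set (Fin n → ℝ)) : IsClosed (dualSet n V) := by
  rw [dualSet_eq_iInter]
  exact isClosed_biInter fun u _ => isClosed_setOf_le_dotProduct u _

theorem dualSet_convexHull (V : Set (Fin n → ℝ)) : dualSet n (convexHull ℝ V) = dualSet n V := by
  refine Set.Subset.antisymm (fun v hv u hu => hv u (subset_convexHull ℝ V hu)) fun v hv => ?_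
  have hhalf : Convex ℝ {u | -1 ≤ v ⬝ᵥ u} := by
    simpa only [dotProduct_comm v] using convex_setOf_le_dotProduct v (-1)
  exact fun u hu => convexHull_min hv hhalf hu

theorem isCompact_dualSet (h0 : 0 ∈ interior V) : IsCompact (dualSet n V) := by
  obtain ⟨r, hr, hball⟩ :=
    Metric.nhds_basis_closedBall.mem_iff.1 (mem_interior_iff_mem_nhds.1 h0)
  have hcoord : ∀ v ∈ dualSet n V, ∀ i, ∀ c : ℝ, |c| ≤ r → -1 ≤ v i * c := by
    intro v hv i c hc
    have hmem : Pi.single i c ∈ V := hball (by rwa [mem_closedBall_zero_iff, Pi.norm_single])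
    simpa only [dotProduct_single] using mem_dualSet.1 hv _ hmem
  have hsub : dualSet n V ⊆ Set.Icc (fun _ => -1 / r) fun _ => 1 / r := fun v hv =>
    ⟨fun i => (div_le_iff₀ hr).2 (hcoord v hv i r (abs_of_pos hr).le), fun i =>
      (le_div_iff₀ hr).2 (by linarith [hcoord v hv i (-r) (by rw [abs_neg, abs_of_pos hr])])⟩
  exact isCompact_Icc.of_isClosed_subset (isClosed_dualSet V) hsub

/-- The points of `V` on the hyperplane `⟨v, ·⟩ = -1`. When `V` is the vertex set of a polytope and
`v` a vertex of the dual polytope, these are the vertices of the facet dual to `v`. -/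
def tightPoints (V : Set (Fin n → ℝ)) (v : Fin n → ℝ) : Set (Fin n → ℝ) :=
  {u ∈ V | v ⬝ᵥ u = -1}

theorem exists_add_smul_mem_dualSet_of_dotProduct_neg (hV : V.Finite) (hv : v ∈ dualSet n V)
    (hw : ∀ u ∈ tightPoints V v, 0 ≤ w ⬝ᵥ u) (hneg : ∃ u ∈ V, w ⬝ᵥ u < 0) :
    ∃ t : ℝ, 0 < t ∧ v + t • w ∈ dualSet n V ∧
      ∃ u ∈ tightPoints V (v + t • w), w ⬝ᵥ u < 0 := by
  -- the ratio test of the simplex method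
  obtain ⟨u₀, ⟨hu₀, hneg₀⟩, hmin⟩ := Set.exists_min_image {u ∈ V | w ⬝ᵥ u < 0}
    (fun u => (v ⬝ᵥ u + 1) / -(w ⬝ᵥ u)) (hV.subset (Set.sep_subset _ _)) hneg
  have hslack : 0 < v ⬝ᵥ u₀ + 1 := by
    have hne : v ⬝ᵥ u₀ ≠ -1 := fun h => (hw u₀ ⟨hu₀, h⟩).not_gt hneg₀
    linarith [lt_of_le_of_ne (mem_dualSet.1 hv u₀ hu₀) hne.symm]
  set t := (v ⬝ᵥ u₀ + 1) / -(w ⬝ᵥ u₀) with ht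
  have htpos : 0 < t := div_pos hslack (neg_pos.2 hneg₀)
  refine ⟨t, htpos, fun u hu => ?_, u₀, ⟨hu₀, ?_⟩, hneg₀⟩
  · change -1 ≤ (v + t • w) ⬝ᵥ u
    rw [add_dotProduct, smul_dotProduct, smul_eq_mul]
    rcases lt_or_ge (w ⬝ᵥ u) 0 with hlt | hge
    · have := (le_div_iff₀ (neg_pos.2 hlt)).1 (hmin u ⟨hu, hlt⟩)
      linarith
    · linarith [mul_nonneg htpos.le hge, mem_dualSet.1 hv u hu]
  · rw [add_dotProduct, smul_dotProduct, smul_eq_mul, ht]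
    field_simp [hneg₀.ne]
    ring

theorem exists_pos_add_smul_mem_dualSet (hV : V.Finite) (hv : v ∈ dualSet n V)
    (hw : ∀ u ∈ tightPoints V v, 0 ≤ w ⬝ᵥ u) : ∃ t : ℝ, 0 < t ∧ v + t • w ∈ dualSet n V := by
  by_cases hneg : ∃ u ∈ V, w ⬝ᵥ u < 0
  · obtain ⟨t, ht, hmem, -⟩ := exists_add_smul_mem_dualSet_of_dotProduct_neg hV hv hw hneg
    exact ⟨t, ht, hmem⟩
  · push Not at hneg
    refine ⟨1, one_pos, mem_dualSet.2 fun u hu => ?_⟩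
    rw [one_smul, add_dotProduct]
    linarith [hneg u hu, mem_dualSet.1 hv u hu]

theorem mem_extremePoints_dualSet_iff (hV : V.Finite) :
    v ∈ (dualSet n V).extremePoints ℝ ↔ v ∈ dualSet n V ∧
      ∀ w : Fin n → ℝ, (∀ u ∈ tightPoints V v, w ⬝ᵥ u = 0) → w = 0 := by
  refine ⟨fun hv => ⟨hv.1, fun w hw => ?_⟩, fun ⟨hv, hann⟩ => ⟨hv, ?_⟩⟩
  · obtain ⟨a, ha, hva⟩ := exists_pos_add_smul_mem_dualSet hV hv.1 fun u hu => (hw u hu).ge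
    obtain ⟨b, hb, hvb⟩ := exists_pos_add_smul_mem_dualSet hV hv.1 (w := -w)
      fun u hu => by rw [neg_dotProduct, hw u hu, neg_zero]
    have hseg : v ∈ openSegment ℝ (v + a • w) (v + b • -w) := by
      refine ⟨b / (a + b), a / (a + b), by positivity, by positivity, by field_simp; ring, ?_⟩
      match_scalars <;> field_simp <;> ring
    have haw : a • w = 0 := by simpa only [add_eq_left] using hv.2 hva hvb hseg
    exact (smul_eq_zero.1 haw).resolve_left ha.ne'
  · rintro x hx y hy ⟨a, b, ha, hb, hab, hxy⟩
    refine sub_eq_zero.1 (hann (x - v) fun u hu => ?_)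
    have hxu : -1 ≤ x ⬝ᵥ u := hx u hu.1
    have hyu : -1 ≤ y ⬝ᵥ u := hy u hu.1
    have hvu : a * (x ⬝ᵥ u) + b * (y ⬝ᵥ u) = -1 := by
      rw [← hu.2, ← hxy, add_dotProduct, smul_dotProduct, smul_dotProduct, smul_eq_mul,
        smul_eq_mul]
    rw [sub_dotProduct, hu.2]
    nlinarith

theorem exists_adjacent_extremePoint (hV : V.Finite) (hv : v ∈ dualSet n V)
    (b : Module.Basis (tightPoints V v) ℝ (Fin n → ℝ)) (hb : ∀ e, b e = e)
    (e : tightPoints V v) (hneg : ∃ u ∈ V, b.coord e u < 0) :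
    ∃ v' ∈ (dualSet n V).extremePoints ℝ, ∃ t : ℝ, 0 < t ∧
      ∀ x, v' ⬝ᵥ x = v ⬝ᵥ x + t * b.coord e x := by
  obtain ⟨w, hw⟩ := exists_forall_dotProduct_eq (b.coord e)
  have hcoord : ∀ e' : tightPoints V v, w ⬝ᵥ e' = if e' = e then 1 else 0 := by
    intro e'
    rw [hw, ← hb e', b.coord_apply, b.repr_self_apply]
  obtain ⟨t, ht, hmem, u₀, hu₀, hneg₀⟩ := exists_add_smul_mem_dualSet_of_dotProduct_neg hV hv
    (w := w) (fun u hu => by rw [hcoord ⟨u, hu⟩]; positivity) (by simpa only [hw] using hneg)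
  have hval : ∀ x, (v + t • w) ⬝ᵥ x = v ⬝ᵥ x + t * (w ⬝ᵥ x) := fun x => by
    rw [add_dotProduct, smul_dotProduct, smul_eq_mul]
  refine ⟨v + t • w, (mem_extremePoints_dualSet_iff hV).2 ⟨hmem, fun z hz => ?_⟩, t, ht,
    fun x => by rw [hval, hw]⟩
  have hkept : ∀ e' ≠ e, z ⬝ᵥ b e' = 0 := fun e' he' => by
    rw [hb]
    exact hz e' ⟨e'.2.1, by rw [hval, hcoord, if_neg he', mul_zero, add_zero, e'.2.2]⟩
  have hprop : ∀ x, z ⬝ᵥ x = z ⬝ᵥ b e * (w ⬝ᵥ x) := fun x => by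
    rw [hw]
    exact apply_eq_mul_coord_of_forall_ne b (f := dotProductEquiv ℝ (Fin n) z) hkept x
  have hze : z ⬝ᵥ b e = 0 :=
    (mul_eq_zero.1 ((hprop u₀).symm.trans (hz u₀ hu₀))).resolve_right hneg₀.ne
  exact dotProduct_eq_zero z fun x => by rw [hprop x, hze, zero_mul]

theorem exists_coord_neg_of_dotProduct_eq_zero (hV : V.Finite)
    (b : Module.Basis (tightPoints V v) ℝ (Fin n → ℝ)) (hb : ∀ e, b e = e)
    {u : Fin n → ℝ} (hu : u ≠ 0) (hvu : v ⬝ᵥ u = 0) : ∃ e, b.coord e u < 0 := by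
  have : Finite (tightPoints V v) := hV.subset (Set.sep_subset _ _)
  have := Fintype.ofFinite (tightPoints V v)
  by_contra! hnonneg
  have hsum : ∑ e, b.coord e u = 0 := by
    have hvb : ∀ e, v ⬝ᵥ b e = -1 := fun e => by rw [hb e, e.2.2]
    rw [← b.sum_repr u, dotProduct_sum] at hvu
    simpa [hvb] using hvu
  have hcoord := (Finset.sum_eq_zero_iff_of_nonneg fun e _ => hnonneg e).1 hsum
  exact hu (b.ext_elem fun e => by simpa using hcoord e (Finset.mem_univ e))

end DualSet

section IntegralPoints

variable {V : Set (Fin n → ℝ)} {v u u' : Fin n → ℝ}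

/-- The points of `V` that pair integrally with every extreme point of the dual set of `V`. If these
extreme points are lattice points, all lattice points of `V` qualify. -/
def integralPoints (V : Set (Fin n → ℝ)) : Set (Fin n → ℝ) :=
  {u ∈ V | ∀ v ∈ (dualSet n V).extremePoints ℝ, ∃ m : ℤ, v ⬝ᵥ u = m}

theorem mem_tightPoints_of_dotProduct_neg (hu : u ∈ integralPoints V)
    (hv : v ∈ (dualSet n V).extremePoints ℝ) (hneg : v ⬝ᵥ u < 0) : u ∈ tightPoints V v := by
  obtain ⟨m, hm⟩ := hu.2 v hv
  have hle : -1 ≤ v ⬝ᵥ u := hv.1 u hu.1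
  rw [hm] at hle hneg
  have hm' : m = -1 := le_antisymm (Int.le_sub_one_of_lt (by exact_mod_cast hneg))
    (by exact_mod_cast hle)
  exact ⟨hu.1, by rw [hm, hm', Int.cast_neg, Int.cast_one]⟩

theorem one_sub_dotProduct_le (hu : u ∈ integralPoints V)
    (hv : v ∈ (dualSet n V).extremePoints ℝ) :
    1 - v ⬝ᵥ u ≤ 2 * (if v ⬝ᵥ u = -1 then 1 else 0) + if v ⬝ᵥ u = 0 then 1 else 0 := by
  rcases lt_or_ge (v ⬝ᵥ u) 0 with hneg | hnonneg
  · rw [(mem_tightPoints_of_dotProduct_neg hu hv hneg).2]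
    norm_num
  · obtain ⟨m, hm⟩ := hu.2 v hv
    rw [hm] at hnonneg ⊢
    rcases (Int.cast_nonneg_iff.1 hnonneg).eq_or_lt with rfl | hpos
    · norm_num
    · have : (1 : ℝ) ≤ m := by exact_mod_cast hpos
      rw [if_neg (by linarith), if_neg (by linarith)]
      linarith

theorem exists_basis_tightPoints (hV : V.Finite) (hv : v ∈ (dualSet n V).extremePoints ℝ)
    (hind : LinearIndepOn ℝ id (tightPoints V v)) :
    ∃ b : Module.Basis (tightPoints V v) ℝ (Fin n → ℝ), ∀ e, b e = e :=
  exists_basis_coe_of_forall_dotProduct_eq_zero hind ((mem_extremePoints_dualSet_iff hV).1 hv).2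

theorem ncard_tightPoints (hV : V.Finite) (hv : v ∈ (dualSet n V).extremePoints ℝ)
    (hind : LinearIndepOn ℝ id (tightPoints V v)) : (tightPoints V v).ncard = n :=
  (exists_basis_tightPoints hV hv hind).elim fun b _ => ncard_eq_of_basis b

theorem eq_of_coord_neg_of_mem_integralPoints (hV : V.Finite)
    (hv : v ∈ (dualSet n V).extremePoints ℝ)
    (hind : ∀ v ∈ (dualSet n V).extremePoints ℝ, LinearIndepOn ℝ id (tightPoints V v))
    (b : Module.Basis (tightPoints V v) ℝ (Fin n → ℝ)) (hb : ∀ e, b e = e) {e : tightPoints V v}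
    (hu : u ∈ integralPoints V) (hvu : v ⬝ᵥ u = 0) (hneg : b.coord e u < 0)
    (hu' : u' ∈ integralPoints V) (hvu' : v ⬝ᵥ u' = 0) (hneg' : b.coord e u' < 0) : u = u' := by
  have hfin : ∀ w, (tightPoints V w).Finite := fun w => hV.subset (Set.sep_subset _ _)
  obtain ⟨v', hv', t, ht, hvt⟩ := exists_adjacent_extremePoint hV hv.1 b hb e ⟨u, hu.1, hneg⟩
  have hmem : ∀ x ∈ integralPoints V, v ⬝ᵥ x = 0 → b.coord e x < 0 →
      x ∈ tightPoints V v' \ tightPoints V v := by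
    intro x hx hvx hxneg
    refine ⟨mem_tightPoints_of_dotProduct_neg hx hv' ?_, fun h => ?_⟩
    · rw [hvt, hvx, zero_add]
      exact mul_neg_of_pos_of_neg ht hxneg
    · linarith [h.2]
  have hlost : tightPoints V v \ tightPoints V v' ⊆ {(e : Fin n → ℝ)} := by
    rintro x ⟨hx, hx'⟩
    by_contra hxe
    have hcoord : b.coord e x = 0 := by
      have hne : (⟨x, hx⟩ : tightPoints V v) ≠ e := fun h => hxe (congrArg Subtype.val h)
      rw [← show b ⟨x, hx⟩ = x from hb _, b.coord_apply, b.repr_self_apply, if_neg hne]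
    exact hx' ⟨hx.1, by rw [hvt, hcoord, mul_zero, add_zero, hx.2]⟩
  have hgained : (tightPoints V v' \ tightPoints V v).ncard ≤ 1 := by
    have hcard : (tightPoints V v').ncard = (tightPoints V v).ncard := by
      rw [ncard_tightPoints hV hv' (hind v' hv'), ncard_tightPoints hV hv (hind v hv)]
    rw [(Set.ncard_eq_ncard_iff_ncard_sdiff_eq_ncard_sdiff (hfin v') (hfin v)).1 hcard,
      ← Set.ncard_singleton (e : Fin n → ℝ)]
    exact Set.ncard_le_ncard hlost
  exact (Set.ncard_le_one ((hfin v').sdiff)).1 hgained u (hmem u hu hvu hneg)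
    u' (hmem u' hu' hvu' hneg')

theorem ncard_integralPoints_dotProduct_eq_zero_le (hV : V.Finite) (h0 : 0 ∉ V)
    (hv : v ∈ (dualSet n V).extremePoints ℝ)
    (hind : ∀ v ∈ (dualSet n V).extremePoints ℝ, LinearIndepOn ℝ id (tightPoints V v)) :
    {u ∈ integralPoints V | v ⬝ᵥ u = 0}.ncard ≤ n := by
  obtain ⟨b, hb⟩ := exists_basis_tightPoints hV hv (hind v hv)
  have hneg : ∀ u ∈ {u ∈ integralPoints V | v ⬝ᵥ u = 0},
      ∃ x, ∃ hx : x ∈ tightPoints V v, b.coord ⟨x, hx⟩ u < 0 := by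
    rintro u ⟨hu, hvu⟩
    obtain ⟨e, he⟩ := exists_coord_neg_of_dotProduct_eq_zero hV b hb
      (ne_of_mem_of_not_mem hu.1 h0) hvu
    exact ⟨e, e.2, he⟩
  choose! f hf hfneg using hneg
  calc {u ∈ integralPoints V | v ⬝ᵥ u = 0}.ncard
      ≤ (tightPoints V v).ncard := by
        refine Set.ncard_le_ncard_of_injOn f hf ?_ (hV.subset (Set.sep_subset _ _))
        intro u hu u' hu' hff
        refine eq_of_coord_neg_of_mem_integralPoints hV hv hind b hb hu.1 hu.2 (hfneg u hu)
          hu'.1 hu'.2 ?_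
        simpa only [hff] using hfneg u' hu'
    _ = n := ncard_tightPoints hV hv (hind v hv)

theorem sum_one_sub_dotProduct_le (hV : V.Finite) (h0 : 0 ∉ V)
    (hv : v ∈ (dualSet n V).extremePoints ℝ)
    (hind : ∀ v ∈ (dualSet n V).extremePoints ℝ, LinearIndepOn ℝ id (tightPoints V v))
    {U : Finset (Fin n → ℝ)} (hU : ↑U ⊆ integralPoints V) : ∑ u ∈ U, (1 - v ⬝ᵥ u) ≤ 3 * n := by
  have hneg : (U.filter fun u => v ⬝ᵥ u = -1).card ≤ n := by
    have hsub : {u | u ∈ U ∧ v ⬝ᵥ u = -1} ⊆ tightPoints V v := fun u hu => ⟨(hU hu.1).1, hu.2⟩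
    rw [← Set.ncard_coe_finset, Finset.coe_filter]
    exact (Set.ncard_le_ncard hsub (hV.subset (Set.sep_subset _ _))).trans
      (ncard_tightPoints hV hv (hind v hv)).le
  have hzero : (U.filter fun u => v ⬝ᵥ u = 0).card ≤ n := by
    have hsub : {u | u ∈ U ∧ v ⬝ᵥ u = 0} ⊆ {u ∈ integralPoints V | v ⬝ᵥ u = 0} :=
      fun u hu => ⟨hU hu.1, hu.2⟩
    rw [← Set.ncard_coe_finset, Finset.coe_filter]
    exact (Set.ncard_le_ncard hsub (hV.subset fun u hu => hu.1.1)).trans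
      (ncard_integralPoints_dotProduct_eq_zero_le hV h0 hv hind)
  calc ∑ u ∈ U, (1 - v ⬝ᵥ u)
      ≤ ∑ u ∈ U, (2 * (if v ⬝ᵥ u = -1 then 1 else 0) + if v ⬝ᵥ u = 0 then 1 else 0) :=
        Finset.sum_le_sum fun u hu => one_sub_dotProduct_le (hU hu) hv
    _ = 2 * (U.filter fun u => v ⬝ᵥ u = -1).card + (U.filter fun u => v ⬝ᵥ u = 0).card := by
        rw [Finset.sum_add_distrib, ← Finset.mul_sum, Finset.sum_boole, Finset.sum_boole]
    _ ≤ 2 * n + n := by gcongr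
    _ = 3 * n := by ring

theorem ncard_integralPoints_le (hV : V.Finite) (h0 : 0 ∉ V) (h0' : 0 ∈ interior (convexHull ℝ V))
    (hind : ∀ v ∈ (dualSet n V).extremePoints ℝ, LinearIndepOn ℝ id (tightPoints V v)) :
    (integralPoints V).ncard ≤ 3 * n := by
  have hfin : (integralPoints V).Finite := hV.subset (Set.sep_subset _ _)
  set U := hfin.toFinset
  have hcompact : IsCompact (dualSet n V) := dualSet_convexHull V ▸ isCompact_dualSet h0'
  have hhalf : dualSet n V ⊆ {v | (U.card : ℝ) - 3 * n ≤ v ⬝ᵥ ∑ u ∈ U, u} := by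
    rw [← closure_convexHull_extremePoints hcompact (convex_dualSet V)]
    refine closure_minimal (convexHull_min (fun v hv => ?_) (convex_setOf_le_dotProduct _ _))
      (isClosed_setOf_le_dotProduct _ _)
    have hsum := sum_one_sub_dotProduct_le hV h0 hv hind hfin.coe_toFinset.subset
    rw [Finset.sum_sub_distrib, Finset.sum_const, nsmul_one, ← dotProduct_sum] at hsum
    exact sub_le_comm.1 hsum
  have hzero : (0 : Fin n → ℝ) ∈ dualSet n V := fun u _ => by simp
  have hcard : (U.card : ℝ) ≤ 3 * n := by
    simpa only [Set.mem_ofPred_eq, zero_dotProduct, sub_nonpos] using hhalf hzero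
  rw [Set.ncard_eq_toFinset_card _ hfin]
  exact_mod_cast hcard

end IntegralPoints

theorem linearIndepOn_extremePoints_of_face_eq_convexHull {Q : Set (Fin n → ℝ)} {w : Fin n → ℝ}
    {c : ℝ} (hc : c ≠ 0) {T : Set (Fin n → ℝ)} (hT : AffineIndependent ℝ ((↑) : T → Fin n → ℝ))
    (hface : {u ∈ Q | w ⬝ᵥ u = c} = convexHull ℝ T) :
    LinearIndepOn ℝ id {u ∈ Q.extremePoints ℝ | w ⬝ᵥ u = c} := by
  have hTw : ∀ t : T, w ⬝ᵥ t = c := fun t =>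
    (hface.symm.subset (subset_convexHull ℝ T t.2)).2
  have hTind : LinearIndepOn ℝ id T :=
    linearIndependent_of_affineIndependent_of_map_eq hT (dotProductEquiv ℝ (Fin n) w) hc hTw
  refine hTind.mono fun u hu => extremePoints_convexHull_subset (𝕜 := ℝ) ?_
  rw [← hface]
  exact inter_extremePoints_subset_extremePoints_of_subset (Set.sep_subset _ _)
    ⟨⟨hu.1.1, hu.2⟩, hu.1⟩

theorem IsLatticePoint.exists_dotProduct_eq_intCast {u v : Fin n → ℝ} (hv : IsLatticePoint v)
    (hu : IsLatticePoint u) : ∃ m : ℤ, v ⬝ᵥ u = m := by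
  choose a ha using hv
  choose b hb using hu
  exact ⟨a ⬝ᵥ b, by simp only [dotProduct, ha, hb, Int.cast_sum, Int.cast_mul]⟩

theorem stmt9_general (n : ℕ) (hn : 1 ≤ n)
    (S : Finset (Fin n → ℝ)) (Q : Set (Fin n → ℝ))
    (hQ : Q = convexHull ℝ (S : Set (Fin n → ℝ)))
    (h0 : (0 : Fin n → ℝ) ∈ interior Q)
    (hsimp : ∀ v : Fin n → ℝ, v ≠ 0 → ∀ c : ℝ, (∀ u ∈ Q, ∑ i, v i * u i ≤ c) →
      ∃ T : Finset (Fin n → ℝ),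
        AffineIndependent ℝ (fun t : {t : Fin n → ℝ // t ∈ T} => t.val) ∧
        {u ∈ Q | ∑ i, v i * u i = c} = convexHull ℝ (T : Set (Fin n → ℝ))) :
    Set.ncard {u ∈ Set.extremePoints ℝ Q |
      ∀ v ∈ Set.extremePoints ℝ (dualSet n Q), ∃ m : ℤ, ∑ i, v i * u i = m} ≤ 3 * n := by
  have : Nonempty (Fin n) := ⟨⟨0, hn⟩⟩
  have hV : (Q.extremePoints ℝ).Finite := hQ ▸ finite_extremePoints_convexHull S.finite_toSet
  have hhull : convexHull ℝ (Q.extremePoints ℝ) = Q := by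
    rw [hQ, convexHull_extremePoints_convexHull S.finite_toSet]
  have hdual : dualSet n Q = dualSet n (Q.extremePoints ℝ) := by
    rw [← dualSet_convexHull (Q.extremePoints ℝ), hhull]
  rw [hdual]
  refine ncard_integralPoints_le hV
    (Set.disjoint_left.1 (disjoint_interior_extremePoints Q) h0) (by rwa [hhull]) fun v hv => ?_
  rw [← hdual] at hv
  rcases eq_or_ne v 0 with rfl | hv0
  · simp [tightPoints]
  · obtain ⟨T, hT, hface⟩ := hsimp (-v) (neg_ne_zero.2 hv0) 1 fun u hu => by
      rw [← dotProduct, neg_dotProduct]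
      linarith [mem_dualSet.1 hv.1 u hu]
    simpa only [tightPoints, neg_dotProduct, neg_eq_iff_eq_neg] using
      linearIndepOn_extremePoints_of_face_eq_convexHull one_ne_zero hT hface

/-- Combinatorial core of Theorem 4.10.  Let `Q ⊆ ℝⁿ` be a polytope containing `0`
in its interior such that every proper face of `Q` (the intersection of `Q` with a
supporting hyperplane) is a simplex, and such that every extreme point of the dual
polytope `Q*` lies in `ℤⁿ`.  Then `Q` has at most `3n` vertices belonging to `ℤⁿ`. -/
theorem stmt9 (n : ℕ) (hn : 1 ≤ n)
    (S : Finset (Fin n → ℝ)) (Q : Set (Fin n → ℝ))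
    (hQ : Q = convexHull ℝ (S : Set (Fin n → ℝ)))
    (h0 : (0 : Fin n → ℝ) ∈ interior Q)
    (hsimp : ∀ v : Fin n → ℝ, v ≠ 0 → ∀ c : ℝ, (∀ u ∈ Q, ∑ i, v i * u i ≤ c) →
      ∃ T : Finset (Fin n → ℝ),
        AffineIndependent ℝ (fun t : {t : Fin n → ℝ // t ∈ T} => t.val) ∧
        {u ∈ Q | ∑ i, v i * u i = c} = convexHull ℝ (T : Set (Fin n → ℝ)))
    (hdual : ∀ v ∈ Set.extremePoints ℝ (dualSet n Q), IsLatticePoint v) :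
    Set.ncard {u ∈ Set.extremePoints ℝ Q | IsLatticePoint u} ≤ 3 * n := by
  have hfin : (Q.extremePoints ℝ).Finite := hQ ▸ finite_extremePoints_convexHull S.finite_toSet
  have hsub : {u ∈ Q.extremePoints ℝ | IsLatticePoint u} ⊆ {u ∈ Q.extremePoints ℝ |
      ∀ v ∈ (dualSet n Q).extremePoints ℝ, ∃ m : ℤ, ∑ i, v i * u i = m} := fun u hu =>
    ⟨hu.1, fun v hv => (hdual v hv).exists_dotProduct_eq_intCast hu.2⟩
  exact (Set.ncard_le_ncard hsub (hfin.subset (Set.sep_subset _ _))).trans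
    (stmt9_general n hn S Q hQ h0 hsimp)
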